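/- arXiv:2208.05405 — 5 statements merged into one kernel-verified Lean document; each statement's English description precedes it below -/
import Mathlib

section
/- Let m, n be positive integers, let A = (a_{ij}) be an m × n real matrix, let b = (β_1, …, β_n) ∈ ℝ^n, let s > 0 be real, let B = sI + (1/2)AᵀA, and let q = e^{−s}. Define F_{A,b,s} : ℝ^m → ℝ₊ by F_{A,b,s}(t) = ∏_{j=1}^n ∏_{k=1}^∞ (1 + 2 q^{2k−1} cos(β_j + Σ_{i=1}^m a_{ij} τ_i) + q^{4k−2}) for t = (τ_1, …, τ_m). Then (2π)^{−m/2} · (∏_{k=1}^∞ (1 − q^{2k}))^n · ∫_{ℝ^m} F_{A,b,s}(t) e^{−‖t‖²/2} dt = Σ_{x ∈ ℤ^n} exp(−⟨Bx, x⟩ + i⟨b, x⟩), where the sum is a complex number and the stated identity holds as complex numbers (the left-hand side being real). -/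
open scoped Matrix
open Filter Topology

/-- The finite `q`-Pochhammer product `∏_{i=1}^k (1 - p^i)`. -/
noncomputable def qPoch (p : ℝ) (k : ℕ) : ℝ := ∏ i ∈ Finset.range k, (1 - p ^ (i + 1))

/-- The reciprocal of `qPoch p`, extended by `0` to the negative integers. -/
noncomputable def qPochInv (p : ℝ) (j : ℤ) : ℝ := if 0 ≤ j then (qPoch p j.toNat)⁻¹ else 0

/-- The coefficient of `z ^ j` in the finite form of the Jacobi triple product. -/
noncomputable def tripleCoeff (q : ℝ) (N : ℕ) (j : ℤ) : ℝ :=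
  qPoch (q ^ 2) (2 * N) * qPochInv (q ^ 2) (N + j) * qPochInv (q ^ 2) (N - j) * q ^ (j ^ 2)

section QPoch

variable {p : ℝ}

lemma qPoch_succ (p : ℝ) (k : ℕ) : qPoch p (k + 1) = qPoch p k * (1 - p ^ (k + 1)) := by
  simp [qPoch, Finset.prod_range_succ]

lemma qPoch_pos (h0 : 0 ≤ p) (h1 : p < 1) (k : ℕ) : 0 < qPoch p k :=
  Finset.prod_pos fun i _ => sub_pos.2 (pow_lt_one₀ h0 h1 (by simp))

lemma qPoch_antitone (h0 : 0 ≤ p) (h1 : p < 1) : Antitone (qPoch p) := by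
  refine antitone_nat_of_succ_le fun k => ?_
  rw [qPoch_succ]
  exact mul_le_of_le_one_right (qPoch_pos h0 h1 k).le (by linarith [pow_nonneg h0 (k + 1)])

lemma qPoch_le_one (h0 : 0 ≤ p) (h1 : p < 1) (k : ℕ) : qPoch p k ≤ 1 := by
  simpa [qPoch] using qPoch_antitone h0 h1 (Nat.zero_le k)

lemma summable_norm_neg_pow_succ (h0 : 0 ≤ p) (h1 : p < 1) :
    Summable fun k : ℕ => ‖-p ^ (k + 1)‖ := by
  simpa [abs_of_nonneg h0] using (summable_nat_add_iff 1).2 (summable_geometric_of_lt_one h0 h1)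

lemma tendsto_qPoch (h0 : 0 ≤ p) (h1 : p < 1) :
    Tendsto (qPoch p) atTop (𝓝 (∏' k : ℕ, (1 - p ^ (k + 1)))) := by
  unfold qPoch
  simpa only [← sub_eq_add_neg] using
    (multipliable_one_add_of_summable (summable_norm_neg_pow_succ h0 h1)).tendsto_prod_tprod_nat

lemma tprod_one_sub_pow_pos (h0 : 0 ≤ p) (h1 : p < 1) : 0 < ∏' k : ℕ, (1 - p ^ (k + 1)) := by
  refine lt_of_le_of_ne (ge_of_tendsto' (tendsto_qPoch h0 h1) fun k => (qPoch_pos h0 h1 k).le) ?_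
  have := tprod_one_add_ne_zero_of_summable (f := fun k : ℕ => -p ^ (k + 1))
    (fun k => by
      have := pow_lt_one₀ h0 h1 (Nat.succ_ne_zero k)
      simp only [Nat.succ_eq_add_one] at this
      linarith) (summable_norm_neg_pow_succ h0 h1)
  simpa [sub_eq_add_neg] using this.symm

lemma tprod_le_qPoch (h0 : 0 ≤ p) (h1 : p < 1) (k : ℕ) :
    ∏' i : ℕ, (1 - p ^ (i + 1)) ≤ qPoch p k :=
  (qPoch_antitone h0 h1).le_of_tendsto (tendsto_qPoch h0 h1) k

lemma qPochInv_nonneg (h0 : 0 ≤ p) (h1 : p < 1) (j : ℤ) : 0 ≤ qPochInv p j := by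
  unfold qPochInv
  split_ifs
  exacts [inv_nonneg.2 (qPoch_pos h0 h1 _).le, le_rfl]

lemma qPochInv_le (h0 : 0 ≤ p) (h1 : p < 1) (j : ℤ) :
    qPochInv p j ≤ (∏' k : ℕ, (1 - p ^ (k + 1)))⁻¹ := by
  have h := tprod_one_sub_pow_pos h0 h1
  unfold qPochInv
  split_ifs
  exacts [inv_anti₀ h (tprod_le_qPoch h0 h1 _), inv_nonneg.2 h.le]

lemma qPochInv_eq_mul_succ (h0 : 0 ≤ p) (h1 : p < 1) (j : ℤ) :
    qPochInv p j = (1 - p ^ (j + 1)) * qPochInv p (j + 1) := by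
  rcases lt_trichotomy j (-1) with hj | rfl | hj
  · rw [qPochInv, qPochInv, if_neg (by lia), if_neg (by lia), mul_zero]
  · simp [qPochInv]
  · lift j to ℕ using by lia
    have h := (qPoch_pos h0 h1 (j + 1)).ne'
    have h' := (qPoch_pos h0 h1 j).ne'
    have : (1 - p ^ ((j : ℤ) + 1)) = 1 - p ^ (j + 1) := by norm_cast
    rw [qPochInv, qPochInv, if_pos (by lia), if_pos (by lia), this]
    rw [show ((j : ℤ) + 1).toNat = j + 1 by lia, Int.toNat_natCast]
    rw [qPoch_succ] at h ⊢
    have h3 := right_ne_zero_of_mul h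
    field_simp

lemma tendsto_qPochInv (h0 : 0 ≤ p) (h1 : p < 1) :
    Tendsto (qPochInv p) atTop (𝓝 (∏' k : ℕ, (1 - p ^ (k + 1)))⁻¹) := by
  have h : Tendsto (fun j : ℤ => (qPoch p j.toNat)⁻¹) atTop
      (𝓝 (∏' k : ℕ, (1 - p ^ (k + 1)))⁻¹) :=
    ((tendsto_qPoch h0 h1).inv₀ (tprod_one_sub_pow_pos h0 h1).ne').comp
      (tendsto_atTop.2 fun k => (eventually_ge_atTop (k : ℤ)).mono fun j hj => by lia)
  refine h.congr' ((eventually_ge_atTop 0).mono fun j hj => ?_)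
  rw [qPochInv, if_pos hj]

end QPoch

section TripleProduct

variable {q : ℝ}

lemma tripleCoeff_zero (q : ℝ) (j : ℤ) : tripleCoeff q 0 j = if j = 0 then 1 else 0 := by
  rcases lt_trichotomy j 0 with h | rfl | h
  · simp [tripleCoeff, qPochInv, h.ne, h]
  · simp [tripleCoeff, qPochInv, qPoch]
  · simp [tripleCoeff, qPochInv, h.ne', h]

lemma tripleCoeff_succ (h0 : 0 < q) (h1 : q < 1) (N : ℕ) (j : ℤ) :
    tripleCoeff q (N + 1) j = (1 + q ^ (4 * N + 2)) * tripleCoeff q N j +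
      q ^ (2 * N + 1) * (tripleCoeff q N (j - 1) + tripleCoeff q N (j + 1)) := by
  have hp0 : 0 ≤ q ^ 2 := by positivity
  have hp1 : q ^ 2 < 1 := pow_lt_one₀ h0.le h1 two_ne_zero
  have hq := h0.ne'
  have key := qPochInv_eq_mul_succ hp0 hp1
  have e1 : ∀ k : ℤ, (q ^ 2) ^ (k + 1) = q ^ 2 * (q ^ 2) ^ k := fun k => by
    rw [zpow_add_one₀ (by positivity), mul_comm]
  set R := qPochInv (q ^ 2) with hR
  set X := (q ^ 2) ^ ((N : ℤ) + j) with hX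
  set Y := (q ^ 2) ^ ((N : ℤ) - j) with hY
  have hXY : X * Y = q ^ (4 * N) := by
    rw [hX, hY, ← zpow_add₀ (by positivity), ← zpow_natCast, ← zpow_natCast, ← zpow_mul]
    congr 1; push_cast; ring
  have ra := key (N + j)
  have ra' := key (N + j - 1)
  have rb := key (N - j)
  have rb' := key (N - j - 1)
  rw [sub_add_cancel] at ra' rb'
  rw [e1] at ra rb
  rw [← hX] at ra ra'
  rw [← hY] at rb rb'
  have z1 : q ^ (2 * N + 1) * q ^ ((j - 1) ^ 2) = q ^ (j ^ 2) * (q ^ 2 * Y) := by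
    rw [hY, ← e1, ← zpow_natCast, ← zpow_natCast, ← zpow_mul, ← zpow_add₀ hq, ← zpow_add₀ hq]
    congr 1; push_cast; ring
  have z2 : q ^ (2 * N + 1) * q ^ ((j + 1) ^ 2) = q ^ (j ^ 2) * (q ^ 2 * X) := by
    rw [hX, ← e1, ← zpow_natCast, ← zpow_natCast, ← zpow_mul, ← zpow_add₀ hq, ← zpow_add₀ hq]
    congr 1; push_cast; ring
  have w1 : q ^ (4 * N + 2) = q ^ 2 * (X * Y) := by rw [hXY]; ring
  have w2 : (q ^ 2) ^ (2 * N + 1) = q ^ 2 * (X * Y) := by rw [hXY]; ring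
  have w3 : (q ^ 2) ^ (2 * N + 1 + 1) = q ^ 4 * (X * Y) := by rw [hXY]; ring
  simp only [tripleCoeff, ← hR]
  rw [show 2 * (N + 1) = 2 * N + 1 + 1 by ring, qPoch_succ, qPoch_succ, w1, w2, w3]
  rw [show ((N + 1 : ℕ) : ℤ) + j = N + j + 1 by push_cast; ring,
    show ((N + 1 : ℕ) : ℤ) - j = N - j + 1 by push_cast; ring,
    show (N : ℤ) + (j - 1) = N + j - 1 by ring, show (N : ℤ) - (j - 1) = N - j + 1 by ring,
    show (N : ℤ) + (j + 1) = N + j + 1 by ring, show (N : ℤ) - (j + 1) = N - j - 1 by ring,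
    ra', rb', ra, rb]
  linear_combination (-qPoch (q ^ 2) (2 * N) * (1 - X) * (1 - q ^ 2 * X) * R (N + j + 1) *
      R (N - j + 1)) * z1 + (-qPoch (q ^ 2) (2 * N) * (1 - Y) * (1 - q ^ 2 * Y) * R (N + j + 1) *
      R (N - j + 1)) * z2

lemma hasSum_tripleCoeff (h0 : 0 < q) (h1 : q < 1) {z : ℂ} (hz : z ≠ 0) (N : ℕ) :
    HasSum (fun j : ℤ => (tripleCoeff q N j : ℂ) * z ^ j)
      (∏ k ∈ Finset.range N,
        (1 + (q : ℂ) ^ (2 * k + 1) * (z + z⁻¹) + (q : ℂ) ^ (4 * k + 2))) := by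
  induction N with
  | zero =>
    rw [Finset.range_zero, Finset.prod_empty]
    convert hasSum_ite_eq (0 : ℤ) (1 : ℂ) using 2 with j
    by_cases h : j = 0 <;> simp [tripleCoeff_zero, h]
  | succ N ih =>
    have hs := ((ih.mul_left (1 + (q : ℂ) ^ (4 * N + 2))).add
      (((Equiv.subRight (1 : ℤ)).hasSum_iff.2 ih).mul_left ((q : ℂ) ^ (2 * N + 1) * z))).add
      (((Equiv.addRight (1 : ℤ)).hasSum_iff.2 ih).mul_left ((q : ℂ) ^ (2 * N + 1) * z⁻¹))
    rw [← add_mul, ← add_mul, show 1 + (q : ℂ) ^ (4 * N + 2) + q ^ (2 * N + 1) * z +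
      q ^ (2 * N + 1) * z⁻¹ = 1 + q ^ (2 * N + 1) * (z + z⁻¹) + q ^ (4 * N + 2) by ring,
      mul_comm _ (Finset.prod _ _), ← Finset.prod_range_succ] at hs
    convert hs using 2 with j
    · rfl
    simp only [Function.comp_apply, Equiv.subRight_apply, Equiv.coe_addRight,
      tripleCoeff_succ h0 h1, zpow_sub_one₀ hz, zpow_add_one₀ hz]
    push_cast
    field_simp
    ring

lemma summable_zpow_sq (h0 : 0 < q) (h1 : q < 1) : Summable fun j : ℤ => q ^ (j ^ 2) := by
  have h : Summable fun k : ℕ => q ^ ((k : ℤ) ^ 2) := by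
    refine (summable_geometric_of_lt_one h0.le h1).of_nonneg_of_le (fun k => by positivity)
      fun k => ?_
    norm_cast
    exact pow_le_pow_of_le_one h0.le h1.le (Nat.le_self_pow two_ne_zero k)
  exact .of_nat_of_neg h (by simpa using h)

/-- The Jacobi triple product, for `z` on the unit circle. -/
lemma jacobi_triple_product (h0 : 0 < q) (h1 : q < 1) {z : ℂ} (hz : ‖z‖ = 1) :
    (∏' k : ℕ, (1 - (q ^ 2) ^ (k + 1)) : ℝ) *
      ∏' k : ℕ, (1 + (q : ℂ) ^ (2 * k + 1) * (z + z⁻¹) + (q : ℂ) ^ (4 * k + 2)) =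
      ∑' j : ℤ, ((q ^ (j ^ 2) : ℝ) : ℂ) * z ^ j := by
  have hp0 : 0 ≤ q ^ 2 := by positivity
  have hp1 : q ^ 2 < 1 := pow_lt_one₀ h0.le h1 two_ne_zero
  have hz0 : z ≠ 0 := norm_ne_zero_iff.1 (by simp [hz])
  set P := ∏' k : ℕ, (1 - (q ^ 2) ^ (k + 1)) with hP
  have hPpos : 0 < P := tprod_one_sub_pow_pos hp0 hp1
  have hodd : Summable fun k : ℕ => q ^ (2 * k + 1) := by
    simpa [pow_add, pow_mul] using (summable_geometric_of_lt_one hp0 hp1).mul_right q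
  have hmul : Multipliable fun k : ℕ =>
      (1 + (q : ℂ) ^ (2 * k + 1) * (z + z⁻¹) + (q : ℂ) ^ (4 * k + 2)) := by
    simp_rw [add_assoc]
    refine multipliable_one_add_of_summable ((hodd.mul_left 3).of_nonneg_of_le
      (fun _ => norm_nonneg _) fun k => ?_)
    have a1 : ‖z + z⁻¹‖ ≤ 2 := (norm_add_le _ _).trans (by rw [norm_inv, hz]; norm_num)
    have a2 : q ^ (4 * k + 2) ≤ q ^ (2 * k + 1) := pow_le_pow_of_le_one h0.le h1.le (by lia)
    have a3 : 0 ≤ q ^ (2 * k + 1) := by positivity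
    refine (norm_add_le _ _).trans ?_
    rw [norm_mul, norm_pow, norm_pow, Complex.norm_of_nonneg h0.le]
    nlinarith
  have hlim1 := hmul.tendsto_prod_tprod_nat
  have hlim2 : Tendsto (fun N : ℕ => ∑' j : ℤ, (tripleCoeff q N j : ℂ) * z ^ j) atTop
      (𝓝 (∑' j : ℤ, ((P⁻¹ * q ^ (j ^ 2) : ℝ) : ℂ) * z ^ j)) := by
    refine tendsto_tsum_of_dominated_convergence
      (bound := fun j => P⁻¹ * P⁻¹ * q ^ (j ^ 2)) ((summable_zpow_sq h0 h1).mul_left _) ?_ ?_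
    · intro j
      refine Tendsto.mul_const _ ((Complex.continuous_ofReal.tendsto _).comp ?_)
      have t1 : Tendsto (fun N : ℕ => qPoch (q ^ 2) (2 * N)) atTop (𝓝 P) :=
        (tendsto_qPoch hp0 hp1).comp (tendsto_id.const_mul_atTop' two_pos)
      have t2 : Tendsto (fun N : ℕ => qPochInv (q ^ 2) (N + j)) atTop (𝓝 P⁻¹) :=
        (tendsto_qPochInv hp0 hp1).comp
          (tendsto_atTop_add_const_right _ _ tendsto_natCast_atTop_atTop)
      have t3 : Tendsto (fun N : ℕ => qPochInv (q ^ 2) (N - j)) atTop (𝓝 P⁻¹) := by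
        simp_rw [sub_eq_add_neg]
        exact (tendsto_qPochInv hp0 hp1).comp
          (tendsto_atTop_add_const_right _ _ tendsto_natCast_atTop_atTop)
      have := ((t1.mul t2).mul t3).mul_const (q ^ (j ^ 2))
      rwa [mul_inv_cancel₀ hPpos.ne', one_mul] at this
    · refine Eventually.of_forall fun N j => ?_
      have b1 := qPoch_le_one hp0 hp1 (2 * N)
      have b1' := (qPoch_pos hp0 hp1 (2 * N)).le
      have b2 := qPochInv_le hp0 hp1 (N + j)
      have b2' := qPochInv_nonneg hp0 hp1 (N + j)
      have b3 := qPochInv_le hp0 hp1 (N - j)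
      have b3' := qPochInv_nonneg hp0 hp1 (N - j)
      rw [norm_mul, norm_zpow, hz, one_zpow, mul_one, Complex.norm_of_nonneg
        (by unfold tripleCoeff; positivity), tripleCoeff]
      gcongr
      exact (mul_le_of_le_one_left b2' b1).trans b2
  simp_rw [(hasSum_tripleCoeff h0 h1 hz0 _).tsum_eq] at hlim2
  rw [tendsto_nhds_unique hlim1 hlim2, ← tsum_mul_left]
  refine tsum_congr fun j => ?_
  have : (P : ℂ) ≠ 0 := by exact_mod_cast hPpos.ne'
  push_cast
  field_simp

end TripleProduct

/-- The Jacobi triple product in trigonometric form. -/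
lemma jacobi_triple_product_cos {q : ℝ} (h0 : 0 < q) (h1 : q < 1) (θ : ℝ) :
    (((∏' k : ℕ, (1 - q ^ (2 * k + 2))) *
      ∏' k : ℕ, (1 + 2 * q ^ (2 * k + 1) * Real.cos θ + q ^ (4 * k + 2)) : ℝ) : ℂ) =
      ∑' j : ℤ, ((q ^ (j ^ 2) : ℝ) : ℂ) * Complex.exp (Complex.I * θ * j) := by
  have hz : ‖Complex.exp (Complex.I * θ)‖ = 1 := by
    rw [mul_comm, Complex.norm_exp_ofReal_mul_I]
  have h := jacobi_triple_product h0 h1 hz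
  simp_rw [← Complex.exp_int_mul, mul_comm _ (Complex.I * (θ : ℂ))] at h
  rw [← h]
  have hP : ∀ k : ℕ, (q ^ 2) ^ (k + 1) = q ^ (2 * k + 2) := fun k => by ring
  have hcos : ∀ k : ℕ, 1 + (q : ℂ) ^ (2 * k + 1) *
      (Complex.exp (Complex.I * θ) + (Complex.exp (Complex.I * θ))⁻¹) + (q : ℂ) ^ (4 * k + 2) =
      ((1 + 2 * q ^ (2 * k + 1) * Real.cos θ + q ^ (4 * k + 2) : ℝ) : ℂ) := fun k => by
    push_cast
    rw [Complex.cos, ← Complex.exp_neg]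
    ring_nf
  simp_rw [hP, hcos]
  rw [Complex.ofReal_mul]
  congr 1
  exact Function.LeftInverse.map_tprod (g := Complex.ofRealHom) (g' := Complex.reAddGroupHom) _
    Complex.continuous_ofReal Complex.continuous_re Complex.ofReal_re

lemma summable_norm_prod_pi {ι R : Type*} [NormedField R] [CompleteSpace R] {n : ℕ}
    {f : Fin n → ι → R} (hf : ∀ j, Summable fun k => ‖f j k‖) :
    Summable fun x : Fin n → ι => ‖∏ j, f j (x j)‖ := by
  induction n with
  | zero => exact (hasSum_fintype _).summable
  | succ n ih =>
    rw [← (Fin.consEquiv fun _ => ι).summable_iff]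
    refine (Summable.mul_of_nonneg (hf 0) (ih fun j => hf j.succ) (fun _ => norm_nonneg _)
      fun _ => norm_nonneg _).congr fun x => ?_
    simp [Fin.prod_univ_succ, Fin.consEquiv]

lemma tsum_prod_pi {ι R : Type*} [NormedField R] [CompleteSpace R] {n : ℕ}
    {f : Fin n → ι → R} (hf : ∀ j, Summable fun k => ‖f j k‖) :
    ∑' x : Fin n → ι, ∏ j, f j (x j) = ∏ j, ∑' k, f j k := by
  induction n with
  | zero => simp
  | succ n ih =>
    rw [← (Fin.consEquiv fun _ => ι).tsum_eq, Fin.prod_univ_succ, ← ih fun j => hf j.succ,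
      tsum_mul_tsum_of_summable_norm (hf 0) (summable_norm_prod_pi fun j => hf j.succ)]
    refine tsum_congr fun x => ?_
    simp [Fin.prod_univ_succ, Fin.consEquiv]

/-- The Fourier transform of the Gaussian density on `ℝᵐ`, evaluated at `c`. -/
lemma integral_gaussian_mul_cexp {m : ℕ} (c : Fin m → ℝ) :
    ∫ t : Fin m → ℝ, Complex.exp (-(1 / 2 : ℂ) * ∑ i, (t i : ℂ) ^ 2 +
      ∑ i, (Complex.I * c i) * t i) =
      (((2 * Real.pi) ^ ((m : ℝ) / 2) : ℝ) : ℂ) * Complex.exp (-(1 / 2) * ∑ i, (c i : ℂ) ^ 2) := by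
  rw [GaussianFourier.integral_cexp_neg_mul_sum_add (by norm_num), Fintype.card_fin,
    Complex.ofReal_cpow (by positivity)]
  congr 1
  · push_cast
    congr 1
    ring
  · simp_rw [mul_pow, Complex.I_sq, ← Finset.mul_sum]
    congr 1
    ring

lemma sum_affine_mul {m n : ℕ} (A : Matrix (Fin m) (Fin n) ℝ) (b x : Fin n → ℝ) (t : Fin m → ℝ) :
    ∑ j, (b j + ∑ i, A i j * t i) * x j = ∑ j, b j * x j + ∑ i, A.mulVec x i * t i := by
  simp only [Matrix.mulVec, dotProduct, add_mul, Finset.sum_add_distrib, Finset.sum_mul]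
  rw [Finset.sum_comm]
  congr 1
  exact Finset.sum_congr rfl fun i _ => Finset.sum_congr rfl fun j _ => by ring

lemma mulVec_dotProduct_self {m n : ℕ} (A : Matrix (Fin m) (Fin n) ℝ) (s : ℝ) (x : Fin n → ℝ) :
    (s • (1 : Matrix (Fin n) (Fin n) ℝ) + (1 / 2 : ℝ) • (Aᵀ * A)).mulVec x ⬝ᵥ x =
      s * ∑ j, x j ^ 2 + 1 / 2 * ∑ i, A.mulVec x i ^ 2 := by
  rw [Matrix.add_mulVec, Matrix.smul_mulVec, Matrix.smul_mulVec, Matrix.one_mulVec,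
    add_dotProduct, smul_dotProduct, smul_dotProduct, ← Matrix.mulVec_mulVec,
    Matrix.mulVec_transpose, ← Matrix.dotProduct_mulVec]
  simp [dotProduct, sq]

lemma norm_zpow_sq_mul_cexp {q : ℝ} (h0 : 0 < q) (θ : ℝ) (j : ℤ) :
    ‖((q ^ (j ^ 2) : ℝ) : ℂ) * Complex.exp (Complex.I * θ * j)‖ = q ^ (j ^ 2) := by
  rw [norm_mul, Complex.norm_of_nonneg (by positivity),
    show Complex.I * θ * j = ((θ * j : ℝ) : ℂ) * Complex.I by push_cast; ring,
    Complex.norm_exp_ofReal_mul_I, mul_one]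

lemma summable_norm_zpow_sq_mul_cexp {q : ℝ} (h0 : 0 < q) (h1 : q < 1) (θ : ℝ) :
    Summable fun j : ℤ => ‖((q ^ (j ^ 2) : ℝ) : ℂ) * Complex.exp (Complex.I * θ * j)‖ := by
  simpa only [norm_zpow_sq_mul_cexp h0] using summable_zpow_sq h0 h1

/-- A product of `n` Jacobi triple products as a sum over `ℤⁿ`. -/
lemma prod_jacobi_triple_product_cos {q : ℝ} (h0 : 0 < q) (h1 : q < 1) {n : ℕ} (θ : Fin n → ℝ) :
    (((∏' k : ℕ, (1 - q ^ (2 * k + 2))) ^ n * ∏ j, ∏' k : ℕ,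
        (1 + 2 * q ^ (2 * k + 1) * Real.cos (θ j) + q ^ (4 * k + 2)) : ℝ) : ℂ) =
      ∑' x : Fin n → ℤ, ∏ j, ((q ^ (x j ^ 2) : ℝ) : ℂ) * Complex.exp (Complex.I * θ j * x j) := by
  rw [tsum_prod_pi fun j => summable_norm_zpow_sq_mul_cexp h0 h1 (θ j)]
  simp_rw [← jacobi_triple_product_cos h0 h1]
  rw [← Complex.ofReal_prod, Finset.prod_mul_distrib, Finset.prod_const, Finset.card_univ,
    Fintype.card_fin]

lemma prod_cexp_mul_gaussian {m n : ℕ} (r : Fin n → ℂ) (A : Matrix (Fin m) (Fin n) ℝ)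
    (b : Fin n → ℝ) (x : Fin n → ℤ) (t : Fin m → ℝ) :
    (∏ j, r j * Complex.exp (Complex.I * (b j + ∑ i, A i j * t i : ℝ) * x j)) *
        (Real.exp (-(∑ i, t i ^ 2) / 2) : ℂ) =
      (∏ j, r j * Complex.exp (Complex.I * b j * x j)) *
        Complex.exp (-(1 / 2 : ℂ) * ∑ i, (t i : ℂ) ^ 2 +
          ∑ i, (Complex.I * (A.mulVec (fun j => (x j : ℝ)) i : ℝ)) * t i) := by
  have h := congrArg ((↑) : ℝ → ℂ) (sum_affine_mul A b (fun j => (x j : ℝ)) t)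
  rw [Complex.ofReal_add, Complex.ofReal_sum, Complex.ofReal_sum, Complex.ofReal_sum] at h
  simp only [Complex.ofReal_mul, Complex.ofReal_intCast] at h
  simp only [Finset.prod_mul_distrib, ← Complex.exp_sum, mul_assoc, ← Finset.mul_sum]
  rw [h, Complex.ofReal_exp, ← Complex.exp_add, ← Complex.exp_add]
  congr 2
  push_cast
  ring

/-- Let `A` be an `m × n` real matrix, `b ∈ ℝⁿ`, `s > 0`, `B = sI + (1/2)AᵀA` and
`q = e^{−s}`. With `F_{A,b,s}(t) = ∏_{j=1}^n ∏_{k=1}^∞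
(1 + 2q^{2k−1} cos(β_j + Σ_i a_{ij}τ_i) + q^{4k−2})`, one has
`(2π)^{−m/2} (∏_{k=1}^∞ (1 − q^{2k}))^n ∫_{ℝᵐ} F_{A,b,s}(t) e^{−‖t‖²/2} dt
  = Σ_{x ∈ ℤⁿ} exp(−⟨Bx, x⟩ + i⟨b, x⟩)`,
an identity of complex numbers whose left-hand side is real.
(Infinite products are indexed below by `k : ℕ`, with `k` corresponding to `k+1` in the
statement, so `2k−1`, `4k−2` and `2k` become `2k+1`, `4k+2` and `2k+2`.) -/
theorem stmt_0 (m n : ℕ) (hm : 0 < m) (hn : 0 < n)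
    (A : Matrix (Fin m) (Fin n) ℝ) (b : Fin n → ℝ) (s : ℝ) (hs : 0 < s)
    (B : Matrix (Fin n) (Fin n) ℝ)
    (hB : B = s • (1 : Matrix (Fin n) (Fin n) ℝ) + (1 / 2 : ℝ) • (Aᵀ * A))
    (q : ℝ) (hq : q = Real.exp (-s)) :
    (((2 * Real.pi) ^ (-(m : ℝ) / 2) * (∏' k : ℕ, (1 - q ^ (2 * k + 2))) ^ n *
        ∫ t : Fin m → ℝ,
          (∏ j, ∏' k : ℕ,
            (1 + 2 * q ^ (2 * k + 1) * Real.cos (b j + ∑ i, A i j * t i) +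
              q ^ (4 * k + 2))) *
            Real.exp (-(∑ i, t i ^ 2) / 2) : ℝ) : ℂ) =
      ∑' x : Fin n → ℤ,
        Complex.exp (-(B.mulVec (fun j => (x j : ℝ)) ⬝ᵥ (fun j => (x j : ℝ)) : ℝ) +
          Complex.I * (∑ j, b j * (x j : ℝ) : ℝ)) := by
  have h0 : 0 < q := hq ▸ Real.exp_pos _
  have h1 : q < 1 := by rw [hq, Real.exp_lt_one_iff]; linarith
  let c : (Fin n → ℤ) → ℂ :=
    fun x => ∏ j, ((q ^ (x j ^ 2) : ℝ) : ℂ) * Complex.exp (Complex.I * b j * x j)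
  let y : (Fin n → ℤ) → Fin m → ℝ := fun x => A.mulVec fun j => (x j : ℝ)
  let G : (Fin m → ℝ) → (Fin m → ℝ) → ℂ := fun v t =>
    Complex.exp (-(1 / 2 : ℂ) * ∑ i, (t i : ℂ) ^ 2 + ∑ i, (Complex.I * v i) * t i)
  have hc : Summable fun x => ‖c x‖ :=
    summable_norm_prod_pi
      (f := fun j (k : ℤ) => ((q ^ (k ^ 2) : ℝ) : ℂ) * Complex.exp (Complex.I * b j * k))
      fun j => summable_norm_zpow_sq_mul_cexp h0 h1 (b j)
  have hG : ∀ v, MeasureTheory.Integrable (G v) := fun v =>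
    GaussianFourier.integrable_cexp_neg_mul_sum_add (b := 1 / 2) (by norm_num)
      fun i => Complex.I * v i
  have hGnorm : ∀ v t, ‖G v t‖ = ‖G 0 t‖ := fun v t => by
    simp [G, Complex.norm_exp, Complex.add_re, Complex.re_sum]
  have hswap := MeasureTheory.integral_tsum_of_summable_integral_norm
    (F := fun x t => c x * G (y x) t) (fun x => (hG (y x)).const_mul _) (by
      simp_rw [norm_mul, hGnorm (y _), MeasureTheory.integral_const_mul]
      exact hc.mul_right _)
  have hpt : ∀ t : Fin m → ℝ, ∑' x, c x * G (y x) t =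
      (((∏' k : ℕ, (1 - q ^ (2 * k + 2))) ^ n * ((∏ j, ∏' k : ℕ,
        (1 + 2 * q ^ (2 * k + 1) * Real.cos (b j + ∑ i, A i j * t i) + q ^ (4 * k + 2))) *
          Real.exp (-(∑ i, t i ^ 2) / 2)) : ℝ) : ℂ) := fun t => by
    rw [← mul_assoc, Complex.ofReal_mul, prod_jacobi_triple_product_cos h0 h1, ← tsum_mul_right]
    exact tsum_congr fun x => (prod_cexp_mul_gaussian _ A b x t).symm
  rw [MeasureTheory.integral_congr_ae (Eventually.of_forall hpt), integral_complex_ofReal,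
    MeasureTheory.integral_const_mul] at hswap
  rw [mul_assoc, Complex.ofReal_mul, ← hswap, ← tsum_mul_left]
  refine tsum_congr fun x => ?_
  have hpow : ∀ j, q ^ (x j ^ 2) = Real.exp (-s * (x j : ℝ) ^ 2) := fun j => by
    rw [hq, ← Real.rpow_intCast, ← Real.exp_mul]
    push_cast
    rfl
  rw [MeasureTheory.integral_const_mul, integral_gaussian_mul_cexp, mul_left_comm (c x),
    ← mul_assoc, ← Complex.ofReal_mul, ← Real.rpow_add (by positivity), neg_div, neg_add_cancel,
    Real.rpow_zero, Complex.ofReal_one, one_mul, hB, mulVec_dotProduct_self]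
  simp only [c, y, hpow, Complex.ofReal_exp, ← Complex.exp_add, ← Complex.exp_sum]
  congr 1
  push_cast
  simp only [Finset.sum_add_distrib, ← Finset.mul_sum, mul_assoc]
  ring
end

section
/- Let 0 < q < 1 and let α, β be real numbers. Then for every real τ, the second derivative of the function τ ↦ ln(1 + 2q cos(ατ + β) + q²) satisfies d²/dτ² ln(1 + 2q cos(ατ + β) + q²) ≤ 2α²q/(1 − q)². -/
/-- `1 + 2q cos x + q²` is positive for `0 < q < 1`. -/
lemma one_add_two_mul_cos_add_sq_pos {q : ℝ} (hq0 : 0 < q) (hq1 : q < 1) (x : ℝ) :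
    0 < 1 + 2 * q * Real.cos x + q ^ 2 := by
  nlinarith [Real.neg_one_le_cos x, pow_pos (sub_pos.2 hq1) 2]

lemma hasDerivAt_cos_affine (α β t : ℝ) :
    HasDerivAt (fun t : ℝ => Real.cos (α * t + β)) (-Real.sin (α * t + β) * α) t := by
  simpa using (((hasDerivAt_id t).const_mul α).add_const β).cos

lemma hasDerivAt_sin_affine (α β t : ℝ) :
    HasDerivAt (fun t : ℝ => Real.sin (α * t + β)) (Real.cos (α * t + β) * α) t := by
  simpa using (((hasDerivAt_id t).const_mul α).add_const β).sin

lemma hasDerivAt_one_add_two_mul_cos_add_sq (q α β t : ℝ) :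
    HasDerivAt (fun t : ℝ => 1 + 2 * q * Real.cos (α * t + β) + q ^ 2)
      (2 * q * (-Real.sin (α * t + β) * α)) t :=
  (((hasDerivAt_cos_affine α β t).const_mul (2 * q)).const_add 1).add_const (q ^ 2)

/-- The second derivative of `ln(1 + 2q cos(ατ + β) + q²)` in closed form. -/
lemma deriv_deriv_log_one_add_two_mul_cos_add_sq {q : ℝ} (hq0 : 0 < q) (hq1 : q < 1)
    (α β τ : ℝ) :
    deriv (deriv (fun t : ℝ => Real.log (1 + 2 * q * Real.cos (α * t + β) + q ^ 2))) τ =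
      2 * α ^ 2 * q * (-((1 + q ^ 2) * Real.cos (α * τ + β) + 2 * q)) /
        (1 + 2 * q * Real.cos (α * τ + β) + q ^ 2) ^ 2 := by
  have hD (t : ℝ) := (one_add_two_mul_cos_add_sq_pos hq0 hq1 (α * t + β)).ne'
  have h_first : deriv (fun t : ℝ => Real.log (1 + 2 * q * Real.cos (α * t + β) + q ^ 2)) =
      fun t => 2 * q * (-Real.sin (α * t + β) * α) /
        (1 + 2 * q * Real.cos (α * t + β) + q ^ 2) :=
    funext fun t => ((hasDerivAt_one_add_two_mul_cos_add_sq q α β t).log (hD t)).deriv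
  have h_num : HasDerivAt (fun t : ℝ => 2 * q * (-Real.sin (α * t + β) * α))
      (2 * q * (-(Real.cos (α * τ + β) * α) * α)) τ :=
    ((hasDerivAt_sin_affine α β τ).fun_neg.mul_const α).const_mul (2 * q)
  rw [h_first, (h_num.fun_div (hasDerivAt_one_add_two_mul_cos_add_sq q α β τ) (hD τ)).deriv]
  congr 1
  linear_combination (-4 * q ^ 2 * α ^ 2) * Real.sin_sq_add_cos_sq (α * τ + β)

/-- Let `0 < q < 1` and `α, β` be real. Then for every real `τ`,
`d²/dτ² ln(1 + 2q cos(ατ + β) + q²) ≤ 2α²q/(1 − q)²`. -/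
theorem stmt_2 (q α β : ℝ) (hq0 : 0 < q) (hq1 : q < 1) (τ : ℝ) :
    deriv (deriv (fun t : ℝ => Real.log (1 + 2 * q * Real.cos (α * t + β) + q ^ 2))) τ ≤
      2 * α ^ 2 * q / (1 - q) ^ 2 := by
  rw [deriv_deriv_log_one_add_two_mul_cos_add_sq hq0 hq1]
  have hD := one_add_two_mul_cos_add_sq_pos hq0 hq1 (α * τ + β)
  have hc := Real.neg_one_le_cos (α * τ + β)
  generalize Real.cos (α * τ + β) = c at hD hc ⊢
  have hu : 0 ≤ 1 + c := by linarith
  have hq : 0 < 1 - q := sub_pos.2 hq1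
  rw [div_le_div_iff₀ (by positivity) (by positivity), mul_assoc (2 * α ^ 2 * q)]
  refine mul_le_mul_of_nonneg_left ?_ (by positivity)
  have h_gap : 0 ≤ 4 * q * (1 + c) * (1 - q) ^ 2 + 4 * q ^ 2 * (1 + c) ^ 2 +
      (1 - q) ^ 2 * (1 + q ^ 2) * (1 + c) := by positivity
  linarith
end

section
/- Let s > 0 be real and let n be a positive integer. For every real k satisfying 30 n e^{−s} ≤ k ≤ 4n e^{−1}, one has Σ_{x ∈ ℤ^n, ‖x‖² ≥ k} e^{−s‖x‖²} ≤ e^{−k}. -/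
theorem one_add_div_one_sub_le_exp {q : ℝ} (h0 : 0 ≤ q) (h1 : q ≤ 3 / 4) :
    (1 + q) / (1 - q) ≤ Real.exp (3 * q) := by
  have hchord : Real.exp (-2 * q) ≤ 1 - q := by
    have hconv := convexOn_exp.2 (Set.mem_univ (0 : ℝ)) (Set.mem_univ (-(3 / 2) : ℝ))
      (show 0 ≤ 1 - 4 / 3 * q by linarith) (show 0 ≤ 4 / 3 * q by linarith) (by ring)
    have hexp : Real.exp (-(3 / 2)) ≤ 1 / 4 := by
      have h4 : (4 : ℝ) ≤ Real.exp (3 / 2) := by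
        have hquad := Real.quadratic_le_exp_of_nonneg (x := 3 / 4) (by norm_num)
        have hsq : Real.exp (3 / 2) = Real.exp (3 / 4) * Real.exp (3 / 4) := by
          rw [← Real.exp_add]; norm_num
        nlinarith
      rw [Real.exp_neg, inv_eq_one_div]
      exact one_div_le_one_div_of_le (by norm_num) h4
    simp only [smul_eq_mul, mul_zero, zero_add, Real.exp_zero, mul_one] at hconv
    rw [show 4 / 3 * q * -(3 / 2) = -2 * q by ring] at hconv
    nlinarith
  rw [div_le_iff₀ (by linarith)]
  calc 1 + q ≤ Real.exp q := by linarith [Real.add_one_le_exp q]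
    _ = Real.exp (3 * q) * Real.exp (-2 * q) := by rw [← Real.exp_add]; ring_nf
    _ ≤ Real.exp (3 * q) * (1 - q) := by gcongr

theorem hasSum_pow_natAbs {q : ℝ} (h0 : 0 ≤ q) (h1 : q < 1) :
    HasSum (fun z : ℤ => q ^ z.natAbs) ((1 + q) / (1 - q)) := by
  have hgeom := hasSum_geometric_of_lt_one h0 h1
  have hneg : HasSum (fun m : ℕ => q ^ (-((m : ℤ) + 1)).natAbs) (q * (1 - q)⁻¹) := by
    have hterm (m : ℕ) : q ^ (-((m : ℤ) + 1)).natAbs = q * q ^ m := by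
      rw [show (-((m : ℤ) + 1)).natAbs = m + 1 by omega, pow_succ']
    simpa only [hterm] using hgeom.mul_left q
  convert HasSum.of_nat_of_neg_add_one (f := fun z : ℤ => q ^ z.natAbs) hgeom hneg using 1
  ring

theorem sum_exp_neg_mul_sq_le {t : ℝ} (ht : 0 < t) (T : Finset ℤ) :
    ∑ z ∈ T, Real.exp (-t * (z : ℝ) ^ 2) ≤
      (1 + Real.exp (-t)) / (1 - Real.exp (-t)) := by
  refine le_trans (Finset.sum_le_sum fun z _ => ?_)
    (sum_le_hasSum T (fun z _ => by positivity)
      (hasSum_pow_natAbs (Real.exp_pos _).le (Real.exp_lt_one_iff.2 (by linarith))))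
  rw [← Real.exp_nat_mul]
  refine Real.exp_le_exp.2 ?_
  have hz : (z.natAbs : ℝ) ≤ (z : ℝ) ^ 2 := by
    rw [Nat.cast_natAbs]
    exact_mod_cast Int.natCast_natAbs z ▸ Int.natAbs_le_self_sq z
  nlinarith

theorem sum_exp_neg_mul_sum_sq_le {ι : Type*} [Fintype ι] {t : ℝ} (ht : 0 < t)
    (S : Finset (ι → ℤ)) :
    ∑ x ∈ S, Real.exp (-t * ∑ i, (x i : ℝ) ^ 2) ≤
      ((1 + Real.exp (-t)) / (1 - Real.exp (-t))) ^ Fintype.card ι := by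
  classical
  let proj : ι → Finset ℤ := fun i => S.image fun x => x i
  have hsub : S ⊆ Fintype.piFinset proj := fun x hx =>
    Fintype.mem_piFinset.2 fun i => Finset.mem_image_of_mem (fun x : ι → ℤ => x i) hx
  calc ∑ x ∈ S, Real.exp (-t * ∑ i, (x i : ℝ) ^ 2)
      ≤ ∑ x ∈ Fintype.piFinset proj,
          Real.exp (-t * ∑ i, (x i : ℝ) ^ 2) :=
        Finset.sum_le_sum_of_subset_of_nonneg hsub fun _ _ _ => (Real.exp_pos _).le
    _ = ∏ i, ∑ z ∈ proj i, Real.exp (-t * (z : ℝ) ^ 2) := by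
        rw [Finset.prod_univ_sum]
        exact Finset.sum_congr rfl fun x _ => by rw [Finset.mul_sum, Real.exp_sum]
    _ ≤ ∏ _i : ι, (1 + Real.exp (-t)) / (1 - Real.exp (-t)) :=
        Finset.prod_le_prod (fun _ _ => Finset.sum_nonneg fun _ _ => (Real.exp_pos _).le)
          fun _ _ => sum_exp_neg_mul_sq_le ht _
    _ = _ := by rw [Finset.prod_const, Finset.card_univ]

theorem exp_five_halves_le : Real.exp (5 / 2) ≤ 15 := by
  have h1 := Real.exp_one_lt_d9
  have hsq : Real.exp (5 / 2) ^ 2 = Real.exp 1 ^ 5 := by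
    rw [← Real.exp_nat_mul, ← Real.exp_nat_mul]; norm_num
  have h5 : Real.exp 1 ^ 5 ≤ 2.7182818286 ^ 5 := by gcongr
  refine le_of_sq_le_sq ?_ (by norm_num)
  rw [hsq]
  exact h5.trans (by norm_num)

/-- Let `s > 0` be real and `n` a positive integer. For every real `k` with
`30 n e^{−s} ≤ k ≤ 4 n e^{−1}`, one has `Σ_{x ∈ ℤⁿ, ‖x‖² ≥ k} e^{−s‖x‖²} ≤ e^{−k}`. -/
theorem stmt_7 (n : ℕ) (hn : 0 < n) (s : ℝ) (hs : 0 < s) (k : ℝ)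
    (hk1 : 30 * n * Real.exp (-s) ≤ k) (hk2 : k ≤ 4 * n * Real.exp (-1)) :
    (∑' x : {x : Fin n → ℤ // k ≤ ∑ i, (x i : ℝ) ^ 2},
        Real.exp (-s * ∑ i, ((x : Fin n → ℤ) i : ℝ) ^ 2)) ≤ Real.exp (-k) := by
  have hn' : (0 : ℝ) < n := by exact_mod_cast hn
  have hk : 0 < k := lt_of_lt_of_le (by positivity) hk1
  obtain ⟨q, hq⟩ : ∃ q : ℝ, q = k / (2 * n) := ⟨_, rfl⟩
  have hkq : k = 2 * n * q := by rw [hq]; field_simp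
  have hq0 : 0 < q := by rw [hq]; positivity
  have hq1 : q ≤ 3 / 4 := by
    have hexp : Real.exp (-1) ≤ 3 / 8 := by
      linarith [Real.exp_neg_one_lt_d9]
    nlinarith
  obtain ⟨t, htq⟩ : ∃ t : ℝ, Real.exp (-t) = q :=
    ⟨-Real.log q, by rw [neg_neg, Real.exp_log hq0]⟩
  have ht : 0 < t := by
    have : Real.exp (-t) < 1 := by linarith
    linarith [Real.exp_lt_one_iff.1 this]
  have hst : 5 / 2 ≤ s - t := by
    have hsq : 15 * Real.exp (-s) ≤ Real.exp (-t) := by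
      rw [htq]; nlinarith
    have : Real.exp (5 / 2 + -s) ≤ Real.exp (-t) := by
      rw [Real.exp_add]
      exact (mul_le_mul_of_nonneg_right exp_five_halves_le (Real.exp_pos _).le).trans hsq
    linarith [Real.exp_le_exp.1 this]
  refine Real.tsum_le_of_sum_le (fun _ => (Real.exp_pos _).le) fun S => ?_
  calc ∑ x ∈ S, Real.exp (-s * ∑ i, ((x : Fin n → ℤ) i : ℝ) ^ 2)
      ≤ ∑ x ∈ S, Real.exp (-(5 / 2) * k) *
          Real.exp (-t * ∑ i, ((x : Fin n → ℤ) i : ℝ) ^ 2) := by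
        refine Finset.sum_le_sum fun x _ => ?_
        rw [← Real.exp_add]
        refine Real.exp_le_exp.2 ?_
        have hx := x.2
        nlinarith [mul_le_mul hst hx hk.le (by linarith)]
    _ = Real.exp (-(5 / 2) * k) * ∑ x ∈ S.map (Function.Embedding.subtype _),
          Real.exp (-t * ∑ i, (x i : ℝ) ^ 2) := by
        rw [← Finset.mul_sum, Finset.sum_map]; rfl
    _ ≤ Real.exp (-(5 / 2) * k) * Real.exp (3 * q) ^ n := by
        gcongr
        refine (sum_exp_neg_mul_sum_sq_le ht _).trans ?_
        rw [htq, Fintype.card_fin]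
        exact pow_le_pow_left₀ (div_nonneg (by linarith) (by linarith))
          (one_add_div_one_sub_le_exp hq0.le hq1) n
    _ = Real.exp (-k) := by
        rw [← Real.exp_nat_mul, ← Real.exp_add, hkq]; ring_nf
end

section
/- Let y ∈ ℝ^n and let 0 < τ ≤ 1. Define Θ(τI, y) = Σ_{x ∈ ℤ^n} e^{−τ‖x − y‖²}, Θ(τI) = Σ_{x ∈ ℤ^n} e^{−τ‖x‖²}, and dist(y, ℤ^n) = min_{x ∈ ℤ^n} ‖x − y‖. Then exp(−41 e^{−π²/τ} dist²(y, ℤ^n)) ≤ Θ(τI, y)/Θ(τI) ≤ exp(−13 e^{−π²/τ} dist²(y, ℤ^n)). -/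
/-- The integer vector `x ∈ ℤⁿ` viewed as a point of Euclidean space `ℝⁿ`. -/
noncomputable def intVec (n : ℕ) (x : Fin n → ℤ) : EuclideanSpace ℝ (Fin n) :=
  (WithLp.equiv 2 (Fin n → ℝ)).symm (fun i => (x i : ℝ))

/-- The dual Gaussian weights `(m + 1)² e^{-π (m + 1)² t}` are dominated by a geometric sequence. -/
lemma succ_sq_mul_exp_le (t : ℝ) (ht : 0 < t) (m : ℕ) :
    ((m : ℝ) + 1) ^ 2 * Real.exp (-Real.pi * (m + 1) ^ 2 * t) ≤
      Real.exp (-Real.pi * t) * (4 * Real.exp (-Real.pi * t) ^ 2) ^ m := by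
  have hm : (m : ℝ) + 1 ≤ 2 ^ m := by exact_mod_cast Nat.lt_two_pow_self (n := m)
  have hq0 := Real.exp_pos (-Real.pi * t)
  have hq1 : Real.exp (-Real.pi * t) ≤ 1 :=
    Real.exp_le_one_iff.mpr (by nlinarith [mul_pos Real.pi_pos ht])
  have he : Real.exp (-Real.pi * (m + 1) ^ 2 * t) = Real.exp (-Real.pi * t) ^ ((m + 1) ^ 2) := by
    rw [← Real.exp_nat_mul]
    push_cast
    ring_nf
  rw [he]
  set q := Real.exp (-Real.pi * t)
  have hpow : q ^ ((m + 1) ^ 2) ≤ q ^ (2 * m + 1) :=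
    pow_le_pow_of_le_one hq0.le hq1 (by nlinarith)
  calc ((m : ℝ) + 1) ^ 2 * q ^ ((m + 1) ^ 2) ≤ (2 ^ m) ^ 2 * q ^ (2 * m + 1) := by gcongr
    _ = q * (4 * q ^ 2) ^ m := by
      rw [mul_pow, ← pow_mul, pow_succ, ← pow_mul, mul_comm m 2, pow_mul (2 : ℝ)]
      norm_num
      ring

lemma exp_neg_pi_mul_le {t : ℝ} (ht : Real.pi ≤ t) : Real.exp (-Real.pi * t) ≤ 1 / 1000 := by
  have h9 : (9 : ℝ) ≤ Real.pi * t := by nlinarith [Real.pi_gt_three]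
  have h1 : (2.7 : ℝ) ≤ Real.exp 1 := by linarith [Real.exp_one_gt_d9]
  have h2 : Real.exp 9 = Real.exp 1 ^ 9 := by rw [← Real.exp_nat_mul]; norm_num
  have h3 : (1000 : ℝ) ≤ Real.exp (Real.pi * t) :=
    calc (1000 : ℝ) ≤ 2.7 ^ 9 := by norm_num
      _ ≤ Real.exp 1 ^ 9 := by gcongr
      _ ≤ Real.exp (Real.pi * t) := by rw [← h2]; exact Real.exp_le_exp.mpr h9
  rw [neg_mul, Real.exp_neg, one_div]
  exact inv_anti₀ (by norm_num) h3

open HurwitzZeta in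
lemma cosKernel_zero_sub_bounds {t d : ℝ} (ht : Real.pi ≤ t) (hd : |d| ≤ 1 / 2) :
    16 * Real.exp (-Real.pi * t) * d ^ 2 ≤ cosKernel (0 : ℝ) t - cosKernel d t ∧
    cosKernel (0 : ℝ) t - cosKernel d t ≤ 40 * Real.exp (-Real.pi * t) * d ^ 2 := by
  have ht0 : 0 < t := Real.pi_pos.trans_le ht
  have hs := (hasSum_nat_cosKernel₀ 0 ht0).sub (hasSum_nat_cosKernel₀ d ht0)
  have hval : cosKernel (0 : ℝ) t - 1 - (cosKernel d t - 1) =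
      cosKernel (0 : ℝ) t - cosKernel d t := by ring
  rw [hval] at hs
  have hq0 := Real.exp_pos (-Real.pi * t)
  have hq := exp_neg_pi_mul_le ht
  constructor
  · have h0 := le_hasSum hs 0 (fun m _ => by
      simp only [mul_zero, zero_mul, Real.cos_zero]
      nlinarith [Real.exp_pos (-Real.pi * ((m : ℝ) + 1) ^ 2 * t),
        Real.cos_le_one (2 * Real.pi * d * (m + 1))])
    refine le_trans ?_ h0
    have hc := Real.cos_le_one_sub_mul_cos_sq (x := 2 * Real.pi * d) (by
      rw [abs_mul, abs_of_pos Real.two_pi_pos]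
      nlinarith [Real.pi_pos])
    have hc' : 2 / Real.pi ^ 2 * (2 * Real.pi * d) ^ 2 = 8 * d ^ 2 := by
      field_simp [Real.pi_ne_zero]
      ring
    rw [hc'] at hc
    simp
    rw [neg_mul] at hq0
    nlinarith
  · have hr : 4 * Real.exp (-Real.pi * t) ^ 2 < 1 := by nlinarith
    have hg := (hasSum_geometric_of_lt_one (by positivity) hr).mul_left
      (4 * Real.pi ^ 2 * d ^ 2 * Real.exp (-Real.pi * t))
    have hle := hasSum_le (fun m => ?_) hs hg
    · refine hle.trans ?_
      rw [← div_eq_mul_inv, div_le_iff₀ (by linarith)]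
      have hpi : Real.pi ^ 2 ≤ 9.88 := by nlinarith [Real.pi_gt_three, Real.pi_lt_d4]
      have hqq : Real.exp (-Real.pi * t) ^ 2 ≤ 1 / 1000 := by nlinarith
      have : 0 ≤ d ^ 2 * Real.exp (-Real.pi * t) := by positivity
      nlinarith
    · have hc := Real.one_sub_sq_div_two_le_cos (x := 2 * Real.pi * d * (m + 1))
      have hw := succ_sq_mul_exp_le t ht0 m
      have he := Real.exp_pos (-Real.pi * ((m : ℝ) + 1) ^ 2 * t)
      simp only [mul_zero, zero_mul, Real.cos_zero]
      calc _ = 2 * (1 - Real.cos (2 * Real.pi * d * (m + 1))) *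
            Real.exp (-Real.pi * ((m : ℝ) + 1) ^ 2 * t) := by ring
        _ ≤ (2 * Real.pi * d * (m + 1)) ^ 2 * Real.exp (-Real.pi * ((m : ℝ) + 1) ^ 2 * t) := by
          gcongr
          linarith
        _ = 4 * Real.pi ^ 2 * d ^ 2 *
            (((m : ℝ) + 1) ^ 2 * Real.exp (-Real.pi * (m + 1) ^ 2 * t)) := by ring
        _ ≤ 4 * Real.pi ^ 2 * d ^ 2 *
            (Real.exp (-Real.pi * t) * (4 * Real.exp (-Real.pi * t) ^ 2) ^ m) := by gcongr
        _ = _ := by ring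

open HurwitzZeta in
lemma cosKernel_zero_bounds {t : ℝ} (ht : Real.pi ≤ t) :
    1 ≤ cosKernel (0 : ℝ) t ∧ cosKernel (0 : ℝ) t ≤ 16 / 13 := by
  have ht0 : 0 < t := Real.pi_pos.trans_le ht
  have hs := hasSum_nat_cosKernel₀ 0 ht0
  simp only [mul_zero, zero_mul, Real.cos_zero, mul_one] at hs
  have hq0 := Real.exp_pos (-Real.pi * t)
  have hq := exp_neg_pi_mul_le ht
  constructor
  · linarith [hs.nonneg fun m => by positivity]
  · have hr : 4 * Real.exp (-Real.pi * t) ^ 2 < 1 := by nlinarith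
    have hg := (hasSum_geometric_of_lt_one (by positivity) hr).mul_left
      (2 * Real.exp (-Real.pi * t))
    have hle := hasSum_le (fun m => ?_) hs hg
    · have : 2 * Real.exp (-Real.pi * t) * (1 - 4 * Real.exp (-Real.pi * t) ^ 2)⁻¹ ≤ 3 / 13 := by
        rw [← div_eq_mul_inv, div_le_iff₀ (by linarith)]
        nlinarith
      linarith
    · have hw := succ_sq_mul_exp_le t ht0 m
      have he := Real.exp_pos (-Real.pi * ((m : ℝ) + 1) ^ 2 * t)
      have hm : (1 : ℝ) ≤ ((m : ℝ) + 1) ^ 2 := by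
        nlinarith [Nat.cast_nonneg (α := ℝ) m]
      nlinarith

open HurwitzZeta in
lemma cosKernel_ratio_bounds {t d : ℝ} (ht : Real.pi ≤ t) (hd : |d| ≤ 1 / 2) :
    Real.exp (-41 * Real.exp (-Real.pi * t) * d ^ 2) ≤ cosKernel d t / cosKernel (0 : ℝ) t ∧
    cosKernel d t / cosKernel (0 : ℝ) t ≤ Real.exp (-13 * Real.exp (-Real.pi * t) * d ^ 2) := by
  obtain ⟨hlow, hupp⟩ := cosKernel_zero_sub_bounds ht hd
  obtain ⟨hone, hle⟩ := cosKernel_zero_bounds ht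
  have hpos : 0 < cosKernel (0 : ℝ) t := by linarith
  have hq0 := Real.exp_pos (-Real.pi * t)
  have hq := exp_neg_pi_mul_le ht
  have hd2 : d ^ 2 ≤ 1 / 4 := by
    rw [← sq_abs]
    nlinarith [abs_nonneg d]
  set q := Real.exp (-Real.pi * t)
  set a := q * d ^ 2 with ha
  have ha0 : 0 ≤ a := by positivity
  have ha1 : a ≤ 1 / 4000 := by nlinarith
  constructor
  · have h1 : Real.exp (-41 * q * d ^ 2) ≤ 1 - 40 * a := by
      have h2 : Real.exp (-41 * q * d ^ 2) = (Real.exp (41 * a))⁻¹ := by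
        rw [← Real.exp_neg, ha]
        ring_nf
      rw [h2, inv_le_iff_one_le_mul₀ (Real.exp_pos _)]
      have h3 := Real.add_one_le_exp (41 * a)
      nlinarith
    refine h1.trans ?_
    rw [le_div_iff₀ hpos]
    nlinarith
  · have h1 := Real.add_one_le_exp (-13 * q * d ^ 2)
    refine le_trans ?_ h1
    rw [div_le_iff₀ hpos]
    nlinarith

open HurwitzZeta in
/-- The one-dimensional Gaussian sum over `ℤ` shifted by `y`. -/
lemma hasSum_exp_neg_mul_int_sub_sq {τ : ℝ} (hτ : 0 < τ) (y : ℝ) :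
    HasSum (fun k : ℤ => Real.exp (-τ * ((k : ℝ) - y) ^ 2))
      (1 / (τ / Real.pi) ^ (1 / 2 : ℝ) *
        cosKernel ((round y - y : ℝ) : UnitAddCircle) (Real.pi / τ)) := by
  have h := hasSum_int_evenKernel (-y) (div_pos hτ Real.pi_pos)
  have hcoe : ((-y : ℝ) : UnitAddCircle) = ((round y - y : ℝ) : UnitAddCircle) := by
    rw [eq_comm, ← sub_eq_zero, ← AddCircle.coe_sub, AddCircle.coe_eq_zero_iff]
    exact ⟨round y, by simp⟩
  rw [hcoe, evenKernel_functional_equation, one_div_div] at h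
  convert h using 3 with k
  field_simp
  ring

/-- A finite product of nonnegative convergent series, expanded as a sum over functions. -/
lemma hasSum_pi_prod {ι : Type*} (n : ℕ) (f : Fin n → ι → ℝ) (s : Fin n → ℝ)
    (h0 : ∀ i k, 0 ≤ f i k) (hf : ∀ i, HasSum (f i) (s i)) :
    HasSum (fun x : Fin n → ι => ∏ i, f i (x i)) (∏ i, s i) := by
  induction n with
  | zero => simp
  | succ n ih =>
    have ht := ih (fun i => f i.succ) (fun i => s i.succ) (fun i => h0 _) (fun i => hf _)
    have hhead : 0 ≤ f 0 := Pi.le_def.mpr (h0 0)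
    have htail : 0 ≤ fun x : Fin n → ι => ∏ i, f i.succ (x i) :=
      Pi.le_def.mpr fun x => Finset.prod_nonneg fun i _ => h0 i.succ (x i)
    have hsum := Summable.mul_of_nonneg (hf 0).summable ht.summable hhead htail
    have hcons : (fun x : Fin (n + 1) → ι => ∏ i, f i (x i)) ∘ Fin.consEquiv (fun _ => ι) =
        fun p => f 0 p.1 * ∏ i, f i.succ (p.2 i) := by
      funext p
      simp [Fin.prod_univ_succ, Fin.consEquiv]
    rw [Fin.prod_univ_succ, ← (Fin.consEquiv fun _ => ι).hasSum_iff, hcons]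
    have hprod := (hf 0).mul ht hsum
    exact hprod

lemma norm_intVec_sub_sq (n : ℕ) (x : Fin n → ℤ) (y : EuclideanSpace ℝ (Fin n)) :
    ‖intVec n x - y‖ ^ 2 = ∑ i, ((x i : ℝ) - y i) ^ 2 := by
  simp [EuclideanSpace.norm_sq_eq, intVec]

lemma tsum_exp_neg_mul_norm_intVec_sub_sq (n : ℕ) (y : EuclideanSpace ℝ (Fin n)) {τ : ℝ}
    (hτ : 0 < τ) :
    ∑' x : Fin n → ℤ, Real.exp (-τ * ‖intVec n x - y‖ ^ 2) =
      ∏ i, (1 / (τ / Real.pi) ^ (1 / 2 : ℝ) *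
        HurwitzZeta.cosKernel ((round (y i) - y i : ℝ) : UnitAddCircle) (Real.pi / τ)) := by
  have h := hasSum_pi_prod n _ _ (fun i k => (Real.exp_pos _).le)
    (fun i => hasSum_exp_neg_mul_int_sub_sq hτ (y i))
  rw [← h.tsum_eq]
  refine tsum_congr fun x => ?_
  rw [norm_intVec_sub_sq, Finset.mul_sum, Real.exp_sum]

lemma infDist_range_intVec_sq (n : ℕ) (y : EuclideanSpace ℝ (Fin n)) :
    Metric.infDist y (Set.range (intVec n)) ^ 2 = ∑ i, ((round (y i) : ℝ) - y i) ^ 2 := by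
  rw [← norm_intVec_sub_sq n (fun i => round (y i)) y, ← dist_eq_norm, dist_comm]
  congr 1
  refine le_antisymm (Metric.infDist_le_dist_of_mem ⟨_, rfl⟩) ?_
  rw [Metric.le_infDist (Set.range_nonempty _)]
  rintro _ ⟨x, rfl⟩
  rw [dist_comm y, dist_comm y, dist_eq_norm, dist_eq_norm,
    ← sq_le_sq₀ (norm_nonneg _) (norm_nonneg _), norm_intVec_sub_sq, norm_intVec_sub_sq]
  refine Finset.sum_le_sum fun i _ => sq_le_sq.mpr ?_
  rw [abs_sub_comm, abs_sub_comm (x i : ℝ)]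
  exact round_le _ _


/-- Let `y ∈ ℝⁿ` and `0 < τ ≤ 1`. With `Θ(τI, y) = Σ_{x ∈ ℤⁿ} e^{−τ‖x − y‖²}`,
`Θ(τI) = Σ_{x ∈ ℤⁿ} e^{−τ‖x‖²}` and `dist(y, ℤⁿ) = min_{x ∈ ℤⁿ} ‖x − y‖`, one has
`exp(−41 e^{−π²/τ} dist²(y, ℤⁿ)) ≤ Θ(τI, y)/Θ(τI) ≤ exp(−13 e^{−π²/τ} dist²(y, ℤⁿ))`. -/
theorem stmt_9 (n : ℕ) (hn : 0 < n) (y : EuclideanSpace ℝ (Fin n)) (τ : ℝ)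
    (hτ0 : 0 < τ) (hτ1 : τ ≤ 1) :
    Real.exp (-41 * Real.exp (-Real.pi ^ 2 / τ) *
        (Metric.infDist y (Set.range (intVec n))) ^ 2) ≤
      (∑' x : Fin n → ℤ, Real.exp (-τ * ‖intVec n x - y‖ ^ 2)) /
        (∑' x : Fin n → ℤ, Real.exp (-τ * ‖intVec n x‖ ^ 2)) ∧
    (∑' x : Fin n → ℤ, Real.exp (-τ * ‖intVec n x - y‖ ^ 2)) /
        (∑' x : Fin n → ℤ, Real.exp (-τ * ‖intVec n x‖ ^ 2)) ≤
      Real.exp (-13 * Real.exp (-Real.pi ^ 2 / τ) *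
        (Metric.infDist y (Set.range (intVec n))) ^ 2) := by
  have ht : Real.pi ≤ Real.pi / τ := by
    rw [le_div_iff₀ hτ0]
    nlinarith [Real.pi_pos]
  have hq : Real.exp (-Real.pi ^ 2 / τ) = Real.exp (-Real.pi * (Real.pi / τ)) := by
    congr 1
    ring
  have hzero : ∑' x : Fin n → ℤ, Real.exp (-τ * ‖intVec n x‖ ^ 2) =
      ∏ _i : Fin n, (1 / (τ / Real.pi) ^ (1 / 2 : ℝ) *
        HurwitzZeta.cosKernel ((0 : ℝ) : UnitAddCircle) (Real.pi / τ)) := by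
    simpa using tsum_exp_neg_mul_norm_intVec_sub_sq n 0 hτ0
  have hc : 1 / (τ / Real.pi) ^ (1 / 2 : ℝ) ≠ 0 :=
    (one_div_pos.mpr (Real.rpow_pos_of_pos (div_pos hτ0 Real.pi_pos) _)).ne'
  have hbd (i : Fin n) := cosKernel_ratio_bounds ht
    (d := round (y i) - y i) (by rw [abs_sub_comm]; exact abs_sub_round _)
  rw [hzero, tsum_exp_neg_mul_norm_intVec_sub_sq n y hτ0, infDist_range_intVec_sq, hq,
    ← Finset.prod_div_distrib, Finset.mul_sum, Finset.mul_sum, Real.exp_sum, Real.exp_sum]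
  simp only [mul_div_mul_left _ _ hc]
  exact ⟨Finset.prod_le_prod (fun i _ => (Real.exp_pos _).le) fun i _ => (hbd i).1,
    Finset.prod_le_prod (fun i _ => (Real.exp_pos _).le.trans (hbd i).1) fun i _ => (hbd i).2⟩
end

section
/- Fix a real γ > 1. Let n ≥ 2 be an integer and let B be an n × n positive definite real matrix such that sI ⪯ B for some real s ≥ γ ln n. Then for every integer k ≥ 1, Σ_{x ∈ ℤ^n, ‖x‖² ≥ k} exp(−⟨Bx, x⟩) ≤ 60 n^{(1−γ)k}. -/
open scoped Matrix

/-- The two-sided geometric series `∑_{j ∈ ℤ} r^|j|`. -/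
lemma hasSum_pow_natAbs_s16 {r : ℝ} (h0 : 0 ≤ r) (h1 : r < 1) :
    HasSum (fun j : ℤ => r ^ j.natAbs) ((1 - r)⁻¹ + r * (1 - r)⁻¹) := by
  apply HasSum.of_nat_of_neg_add_one
  · simpa using hasSum_geometric_of_lt_one h0 h1
  · have h := (hasSum_geometric_of_lt_one h0 h1).mul_left r
    refine h.congr_fun fun m => ?_
    have : (-((m : ℤ) + 1)).natAbs = m + 1 := by omega
    rw [this, pow_succ']

/-- The sum of `n^{-|x|₁}` over any finite set of points of `ℤⁿ` is at most `e⁴`. -/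
lemma sum_prod_inv_pow_natAbs_le {n : ℕ} (hn : 2 ≤ n) (S : Finset (Fin n → ℤ)) :
    ∑ x ∈ S, ∏ i, ((n : ℝ)⁻¹) ^ (x i).natAbs ≤ Real.exp 4 := by
  have hn' : (2 : ℝ) ≤ n := by exact_mod_cast hn
  have h0 : (0 : ℝ) ≤ (n : ℝ)⁻¹ := by positivity
  have h1 : (n : ℝ)⁻¹ < 1 := inv_lt_one_of_one_lt₀ (by linarith)
  set T : Fin n → Finset ℤ := fun i => S.image fun x => x i
  have hline (i : Fin n) :
      ∑ j ∈ T i, ((n : ℝ)⁻¹) ^ j.natAbs ≤ Real.exp (2 / (n - 1)) := by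
    refine (sum_le_hasSum _ (fun j _ => by positivity) (hasSum_pow_natAbs_s16 h0 h1)).trans ?_
    have hne : (n : ℝ) - 1 ≠ 0 := by linarith
    have hval : (1 - (n : ℝ)⁻¹)⁻¹ + (n : ℝ)⁻¹ * (1 - (n : ℝ)⁻¹)⁻¹ = 2 / (n - 1) + 1 := by
      have : (1 - (n : ℝ)⁻¹) = (n - 1) / n := by field_simp
      rw [this]
      field_simp
      ring
    rw [hval]
    exact Real.add_one_le_exp _
  calc ∑ x ∈ S, ∏ i, ((n : ℝ)⁻¹) ^ (x i).natAbs
      ≤ ∑ x ∈ Fintype.piFinset T, ∏ i, ((n : ℝ)⁻¹) ^ (x i).natAbs := by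
        refine Finset.sum_le_sum_of_subset_of_nonneg (fun x hx => ?_)
          fun x _ _ => by positivity
        exact Fintype.mem_piFinset.2 fun i => Finset.mem_image_of_mem _ hx
    _ = ∏ i, ∑ j ∈ T i, ((n : ℝ)⁻¹) ^ j.natAbs :=
        (Finset.prod_univ_sum T fun _ j => ((n : ℝ)⁻¹) ^ j.natAbs).symm
    _ ≤ ∏ _i : Fin n, Real.exp (2 / (n - 1)) :=
        Finset.prod_le_prod (fun i _ => by positivity) fun i _ => hline i
    _ = Real.exp (n * (2 / (n - 1))) := by
        rw [Finset.prod_const, Finset.card_univ, Fintype.card_fin, ← Real.exp_nat_mul]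
    _ ≤ Real.exp 4 := by
        rw [Real.exp_le_exp, mul_div_assoc', div_le_iff₀ (by linarith)]
        linarith

lemma exp_four_le_sixty : Real.exp 4 ≤ 60 := by
  have h : Real.exp 4 = Real.exp 1 ^ 4 := by rw [← Real.exp_nat_mul]; norm_num
  rw [h]
  calc Real.exp 1 ^ 4 ≤ 2.7182818286 ^ 4 := by
        gcongr
        exact Real.exp_one_lt_d9.le
    _ ≤ 60 := by norm_num

/-- `sI ⪯ B` gives `s‖v‖² ≤ ⟨Bv, v⟩`. -/
lemma mul_sum_sq_le_mulVec_dotProduct {n : ℕ} {B : Matrix (Fin n) (Fin n) ℝ} {s : ℝ}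
    (hsB : (B - s • (1 : Matrix (Fin n) (Fin n) ℝ)).PosSemidef) (v : Fin n → ℝ) :
    s * ∑ i, v i ^ 2 ≤ B.mulVec v ⬝ᵥ v := by
  have h := hsB.dotProduct_mulVec_nonneg v
  rw [star_trivial, Matrix.sub_mulVec, Matrix.smul_mulVec, Matrix.one_mulVec, dotProduct_sub,
    dotProduct_smul, smul_eq_mul, dotProduct_comm] at h
  have hv : v ⬝ᵥ v = ∑ i, v i ^ 2 := by simp only [dotProduct, sq]
  rw [← hv]
  linarith

lemma exp_neg_log_mul_sum_sq_le {n : ℕ} (hn : 1 ≤ n) (x : Fin n → ℤ) :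
    Real.exp (-(Real.log n * ∑ i, (x i : ℝ) ^ 2)) ≤ ∏ i, ((n : ℝ)⁻¹) ^ (x i).natAbs := by
  have hn' : (1 : ℝ) ≤ n := by exact_mod_cast hn
  rw [Finset.mul_sum, ← Finset.sum_neg_distrib, Real.exp_sum]
  refine Finset.prod_le_prod (fun i _ => (Real.exp_pos _).le) fun i _ => ?_
  have hinv : (n : ℝ)⁻¹ = Real.exp (-Real.log n) := by
    rw [Real.exp_neg, Real.exp_log (by linarith)]
  rw [hinv, ← Real.exp_nat_mul, Real.exp_le_exp]
  have hsq : ((x i).natAbs : ℝ) ≤ (x i : ℝ) ^ 2 := by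
    have : ((x i).natAbs : ℤ) ≤ x i ^ 2 := Int.natAbs_le_self_sq (x i)
    rw [Nat.cast_natAbs]
    exact_mod_cast this
  nlinarith [mul_le_mul_of_nonneg_left hsq (Real.log_nonneg hn')]

/-- Fix a real `γ > 1`. Let `n ≥ 2` and let `B` be an `n × n` positive definite real matrix
with `sI ⪯ B` for some real `s ≥ γ ln n`. Then for every integer `k ≥ 1`,
`Σ_{x ∈ ℤⁿ, ‖x‖² ≥ k} exp(−⟨Bx, x⟩) ≤ 60 n^{(1−γ)k}`. -/
theorem stmt_16 (γ : ℝ) (hγ : 1 < γ) (n : ℕ) (hn : 2 ≤ n)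
    (B : Matrix (Fin n) (Fin n) ℝ) (hB : B.PosDef) (s : ℝ)
    (hs : γ * Real.log n ≤ s) (hsB : (B - s • (1 : Matrix (Fin n) (Fin n) ℝ)).PosSemidef)
    (k : ℕ) (hk : 1 ≤ k) :
    (∑' x : {x : Fin n → ℤ // (k : ℝ) ≤ ∑ i, (x i : ℝ) ^ 2},
        Real.exp (-(B.mulVec (fun i => ((x : Fin n → ℤ) i : ℝ)) ⬝ᵥ
          (fun i => ((x : Fin n → ℤ) i : ℝ))))) ≤
      60 * (n : ℝ) ^ ((1 - γ) * k) := by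
  have hn' : (2 : ℝ) ≤ n := by exact_mod_cast hn
  have hlog : 0 ≤ Real.log n := Real.log_nonneg (by linarith)
  have hterm (x : {x : Fin n → ℤ // (k : ℝ) ≤ ∑ i, (x i : ℝ) ^ 2}) :
      Real.exp (-(B.mulVec (fun i => ((x : Fin n → ℤ) i : ℝ)) ⬝ᵥ
          (fun i => ((x : Fin n → ℤ) i : ℝ)))) ≤
        (∏ i, ((n : ℝ)⁻¹) ^ ((x : Fin n → ℤ) i).natAbs) * (n : ℝ) ^ ((1 - γ) * k) := by
    obtain ⟨x, hx⟩ := x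
    have hquad := mul_sum_sq_le_mulVec_dotProduct hsB fun i => (x i : ℝ)
    refine le_trans ?_ (mul_le_mul_of_nonneg_right
      (exp_neg_log_mul_sum_sq_le (by omega) x) (by positivity))
    rw [Real.rpow_def_of_pos (by linarith), ← Real.exp_add, Real.exp_le_exp]
    have hN : (0 : ℝ) ≤ ∑ i, (x i : ℝ) ^ 2 := by positivity
    have hsN := mul_le_mul_of_nonneg_right hs hN
    have hkN := mul_le_mul_of_nonneg_left hx (mul_nonneg hlog (sub_nonneg.2 hγ.le))
    linarith
  refine tsum_le_of_sum_le' (by positivity) fun S => ?_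
  calc _ ≤ ∑ x ∈ S, (∏ i, ((n : ℝ)⁻¹) ^ ((x : Fin n → ℤ) i).natAbs) *
          (n : ℝ) ^ ((1 - γ) * k) := Finset.sum_le_sum fun x _ => hterm x
    _ = (∑ x ∈ S.map (Function.Embedding.subtype _), ∏ i, ((n : ℝ)⁻¹) ^ (x i).natAbs) *
          (n : ℝ) ^ ((1 - γ) * k) := by
        rw [Finset.sum_map, Finset.sum_mul]
        rfl
    _ ≤ 60 * (n : ℝ) ^ ((1 - γ) * k) := by
        gcongr
        exact (sum_prod_inv_pow_natAbs_le hn _).trans exp_four_le_sixty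
end
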